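/- arXiv:0709.1129 — 2 statements merged into one kernel-verified Lean document; each statement's English description precedes it below -/
import Mathlib

section
/- Let U be a nonempty bounded open subset of ℝⁿ and let f : ℝⁿ → ℂ be continuous with f(x) ≠ 0 for every x in the frontier of U. Then there exists δ > 0 such that the set of connected components K of U containing some point x with ‖f(x)‖ < δ is finite. -/
/-!
Write `g = ‖f‖` and `a = 0`. On the compact set `frontier U`, the lower semicontinuous function `g`
is bounded below by some `ε > a`. For `a < δ < ε`, the compact set `C = closure U ∩ {g ≤ δ}` misses
the frontier, so it lies in the interior of `U`. As the space is locally connected, the components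
of `U` through points of `C` are neighbourhoods of those points, so finitely many of them cover `C`;
any component meeting `C` is one of these, since components that intersect are equal.
-/

section

open Set

variable {X α : Type*} [TopologicalSpace X] [LinearOrder α]

theorem finite_image_connectedComponentIn [LocallyConnectedSpace X] {C U : Set X}
    (hC : IsCompact C) (hCU : C ⊆ interior U) : (connectedComponentIn U '' C).Finite := by
  obtain ⟨t, -, hCt⟩ := hC.elim_nhds_subcover (connectedComponentIn U) fun x hx =>
    connectedComponentIn_mem_nhds (mem_interior_iff_mem_nhds.1 (hCU hx))
  refine (t.finite_toSet.image (connectedComponentIn U)).subset ?_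
  rintro _ ⟨x, hx, rfl⟩
  obtain ⟨z, hz, hxz⟩ := mem_iUnion₂.1 (hCt hx)
  exact ⟨z, hz, connectedComponentIn_eq hxz⟩

theorem exists_gt_forall_le_of_lowerSemicontinuousOn [NoMaxOrder α] {F : Set X} {g : X → α} {a : α}
    (hF : IsCompact F) (hg : LowerSemicontinuousOn g F) (ha : ∀ x ∈ F, a < g x) :
    ∃ ε > a, ∀ x ∈ F, ε ≤ g x := by
  rcases F.eq_empty_or_nonempty with rfl | hFne
  · simpa using exists_gt a
  · obtain ⟨x, hx, hmin⟩ := hg.exists_isMinOn hFne hF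
    exact ⟨g x, ha x hx, hmin⟩

theorem exists_gt_closure_inter_preimage_Iic_subset_interior [DenselyOrdered α] [NoMaxOrder α]
    {U : Set X} {g : X → α} {a : α} (hU : IsCompact (frontier U))
    (hg : LowerSemicontinuousOn g (frontier U)) (ha : ∀ x ∈ frontier U, a < g x) :
    ∃ δ > a, closure U ∩ g ⁻¹' Iic δ ⊆ interior U := by
  obtain ⟨ε, haε, hε⟩ := exists_gt_forall_le_of_lowerSemicontinuousOn hU hg ha
  obtain ⟨δ, haδ, hδε⟩ := exists_between haε
  refine ⟨δ, haδ, fun x ⟨hxU, hxδ⟩ => ?_⟩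
  by_contra hx
  exact (hδε.trans_le (hε x ⟨hxU, hx⟩)).not_ge hxδ

theorem stmt_6_general [LocallyConnectedSpace X] [DenselyOrdered α] [NoMaxOrder α]
    {U : Set X} {g : X → α} {a : α} (hU : IsCompact (closure U))
    (hg : LowerSemicontinuousOn g (closure U)) (ha : ∀ x ∈ frontier U, a < g x) :
    ∃ δ > a, {K : Set X |
      (∃ y ∈ U, K = connectedComponentIn U y) ∧ ∃ x ∈ K, g x < δ}.Finite := by
  obtain ⟨δ, haδ, hδ⟩ := exists_gt_closure_inter_preimage_Iic_subset_interior
    (hU.of_isClosed_subset isClosed_frontier frontier_subset_closure)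
    (hg.mono frontier_subset_closure) ha
  have hC : IsCompact (closure U ∩ g ⁻¹' Iic δ) := hg.isCompact_inter_preimage_Iic hU δ
  refine ⟨δ, haδ, (finite_image_connectedComponentIn hC hδ).subset ?_⟩
  rintro _ ⟨⟨y, -, rfl⟩, x, hx, hxδ⟩
  have hxU : x ∈ U := connectedComponentIn_subset U y hx
  exact ⟨x, ⟨subset_closure hxU, hxδ.le⟩, (connectedComponentIn_eq hx).symm⟩

end

/-- If `f` is continuous and nonvanishing on the frontier of a nonempty bounded open
set `U ⊆ ℝⁿ`, then there is `δ > 0` such that only finitely many connected components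
of `U` contain a point where `‖f‖ < δ`. -/
theorem stmt_6 (n : ℕ) (U : Set (EuclideanSpace ℝ (Fin n)))
    (hUopen : IsOpen U) (hUne : U.Nonempty) (hUbdd : Bornology.IsBounded U)
    (f : EuclideanSpace ℝ (Fin n) → ℂ) (hf : Continuous f)
    (hf0 : ∀ x ∈ frontier U, f x ≠ 0) :
    ∃ δ > (0 : ℝ),
      {K : Set (EuclideanSpace ℝ (Fin n)) |
        (∃ y ∈ U, K = connectedComponentIn U y) ∧ ∃ x ∈ K, ‖f x‖ < δ}.Finite :=
  stmt_6_general hUbdd.isCompact_closure hf.norm.continuousOn.lowerSemicontinuousOn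
    fun x hx => norm_pos_iff.2 (hf0 x hx)
end

section
/- Let φ : ℂ → ℂ be continuously differentiable in the real sense (C¹ as a function of two real variables) with compact support, and define the Cauchy transform u : ℂ → ℂ by u(z) = (1/π) ∫_ℂ φ(w)/(z − w) dA(w), where dA is Lebesgue measure on ℂ ≅ ℝ². Then u is complex differentiable at every point of the complement of the closed support of φ, and u(z) tends to 0 as |z| → ∞ (i.e., u tends to 0 along the cocompact filter on ℂ). -/
open MeasureTheory Filter

/-!
If `z` stays at distance at least `δ` from the support of `f`, then the kernel `((z - w) ^ n)⁻¹` is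
bounded by `(δ ^ n)⁻¹` wherever `f` does not vanish. For `n = 2` and `z` in a small ball off the
support this dominates the `z`-derivative of the integrand, which allows differentiation under the
integral sign. For `n = 1` and `δ = ‖z‖ / 2`, with `z` far from a compact support, it shows that the
transform decays like `z⁻¹`.
-/

section PseudoMetricSpace

variable {X : Type*} [PseudoMetricSpace X] {s : Set X} {z : X}

lemma exists_pos_forall_mem_ball_le_dist (hs : IsClosed s) (hz : z ∉ s) :
    ∃ δ > 0, ∀ x ∈ Metric.ball z δ, ∀ w ∈ s, δ ≤ dist x w := by
  obtain ⟨ε, hε, hball⟩ := Metric.isOpen_iff.1 hs.isOpen_compl z hz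
  refine ⟨ε / 2, half_pos hε, fun x hx w hw => ?_⟩
  have hzw : ε ≤ dist w z := not_lt.1 fun hlt => hball hlt hw
  linarith [dist_triangle_left w z x, Metric.mem_ball.1 hx]

end PseudoMetricSpace

section CauchyTransform

variable {𝕜 E : Type*} [RCLike 𝕜] [NormedAddCommGroup E] [NormedSpace 𝕜 E]
  {μ : Measure 𝕜} {f : 𝕜 → E} {z : 𝕜} {δ : ℝ}

lemma norm_inv_sub_pow_smul_le (hδ : 0 < δ) (hf : ∀ w ∈ tsupport f, δ ≤ dist z w) (n : ℕ)
    (w : 𝕜) : ‖((z - w) ^ n)⁻¹ • f w‖ ≤ (δ ^ n)⁻¹ * ‖f w‖ := by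
  by_cases hw : f w = 0
  · simp [hw]
  · have hzw : δ ≤ ‖z - w‖ := dist_eq_norm z w ▸ hf w (subset_tsupport f hw)
    rw [norm_smul, norm_inv, norm_pow]
    gcongr

lemma aestronglyMeasurable_inv_sub_pow_smul (hf : AEStronglyMeasurable f μ) (z : 𝕜) (n : ℕ) :
    AEStronglyMeasurable (fun w => ((z - w) ^ n)⁻¹ • f w) μ :=
  ((measurable_const.sub measurable_id).pow_const n).inv.aestronglyMeasurable.smul hf

lemma integrable_inv_sub_pow_smul (hf : Integrable f μ) (hz : z ∉ tsupport f) (n : ℕ) :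
    Integrable (fun w => ((z - w) ^ n)⁻¹ • f w) μ := by
  obtain ⟨δ, hδ, hdist⟩ := exists_pos_forall_mem_ball_le_dist (isClosed_tsupport f) hz
  exact (hf.norm.const_mul (δ ^ n)⁻¹).mono' (aestronglyMeasurable_inv_sub_pow_smul hf.1 z n)
    (ae_of_all _ (norm_inv_sub_pow_smul_le hδ (hdist z (Metric.mem_ball_self hδ)) n))

variable [NormedSpace ℝ E]

/-- The Cauchy transform `z ↦ ∫ f(w) / (z - w) dμ(w)` of `f` with respect to `μ`. Normalizing
factors such as `1 / π` are part of `μ`. Where the integrand is not integrable, the value is `0`. -/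
noncomputable def cauchyTransform (μ : Measure 𝕜) (f : 𝕜 → E) (z : 𝕜) : E :=
  ∫ w, (z - w)⁻¹ • f w ∂μ

theorem hasDerivAt_cauchyTransform (hf : Integrable f μ) (hz : z ∉ tsupport f) :
    HasDerivAt (cauchyTransform μ f) (-∫ w, ((z - w) ^ 2)⁻¹ • f w ∂μ) z := by
  obtain ⟨δ, hδ, hdist⟩ := exists_pos_forall_mem_ball_le_dist (isClosed_tsupport f) hz
  have hmeas (n : ℕ) (x : 𝕜) : AEStronglyMeasurable (fun w => ((x - w) ^ n)⁻¹ • f w) μ :=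
    aestronglyMeasurable_inv_sub_pow_smul hf.1 x n
  have hderiv (w x : 𝕜) (hx : x ∈ Metric.ball z δ) :
      HasDerivAt (fun y => (y - w)⁻¹ • f w) (-(((x - w) ^ 2)⁻¹ • f w)) x := by
    by_cases hw : f w = 0
    · simpa [hw] using hasDerivAt_const x (0 : E)
    · have hxw : x - w ≠ 0 :=
        sub_ne_zero.2 (dist_pos.1 (hδ.trans_le (hdist x hx w (subset_tsupport f hw))))
      simpa only [neg_smul] using ((hasDerivAt_inv hxw).comp_sub_const x w).smul_const (f w)
  have hbound (w x : 𝕜) (hx : x ∈ Metric.ball z δ) :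
      ‖-(((x - w) ^ 2)⁻¹ • f w)‖ ≤ (δ ^ 2)⁻¹ * ‖f w‖ :=
    (norm_neg _).trans_le (norm_inv_sub_pow_smul_le hδ (hdist x hx) 2 w)
  rw [← integral_neg]
  exact (hasDerivAt_integral_of_dominated_loc_of_deriv_le (Metric.ball_mem_nhds z hδ)
    (.of_forall fun x => by simpa only [pow_one] using hmeas 1 x)
    (by simpa only [pow_one] using integrable_inv_sub_pow_smul hf hz 1)
    (hmeas 2 z).neg (ae_of_all _ hbound) (hf.norm.const_mul _) (ae_of_all _ hderiv)).2

lemma norm_cauchyTransform_le (hf : Integrable f μ) (hδ : 0 < δ)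
    (hdist : ∀ w ∈ tsupport f, δ ≤ dist z w) :
    ‖cauchyTransform μ f z‖ ≤ δ⁻¹ * ∫ w, ‖f w‖ ∂μ := by
  rw [← integral_const_mul]
  exact norm_integral_le_of_norm_le (hf.norm.const_mul _)
    (ae_of_all _ fun w => by simpa only [pow_one] using norm_inv_sub_pow_smul_le hδ hdist 1 w)

theorem cauchyTransform_isBigO_inv (hf : Integrable f μ) (hsupp : HasCompactSupport f) :
    cauchyTransform μ f =O[cocompact 𝕜] fun z => z⁻¹ := by
  obtain ⟨R, hR, hbound⟩ := hsupp.isCompact.isBounded.exists_pos_norm_le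
  refine .of_bound (2 * ∫ w, ‖f w‖ ∂μ) ?_
  filter_upwards [(tendsto_norm_cocompact_atTop (E := 𝕜)).eventually_ge_atTop (2 * R)] with z hz
  have hdist (w : 𝕜) (hw : w ∈ tsupport f) : ‖z‖ / 2 ≤ dist z w := by
    rw [dist_eq_norm]
    linarith [norm_sub_norm_le z w, hbound w hw]
  calc ‖cauchyTransform μ f z‖ ≤ (‖z‖ / 2)⁻¹ * ∫ w, ‖f w‖ ∂μ :=
        norm_cauchyTransform_le hf (by linarith) hdist
    _ = (2 * ∫ w, ‖f w‖ ∂μ) * ‖z⁻¹‖ := by rw [norm_inv, inv_div]; ring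

theorem tendsto_cauchyTransform_cocompact (hf : Integrable f μ) (hsupp : HasCompactSupport f) :
    Tendsto (cauchyTransform μ f) (cocompact 𝕜) (nhds 0) :=
  (cauchyTransform_isBigO_inv hf hsupp).trans_tendsto
    (Metric.cobounded_eq_cocompact (α := 𝕜) ▸ tendsto_inv₀_cobounded)

theorem stmt_13_general (hf : Integrable f μ) (hsupp : HasCompactSupport f) :
    (∀ z ∈ (tsupport f)ᶜ, DifferentiableAt 𝕜 (cauchyTransform μ f) z) ∧
      Tendsto (cauchyTransform μ f) (cocompact 𝕜) (nhds 0) :=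
  ⟨fun _ hz => (hasDerivAt_cauchyTransform hf hz).differentiableAt,
    tendsto_cauchyTransform_cocompact hf hsupp⟩

end CauchyTransform

/-- The Cauchy transform `u(z) = (1/π) ∫ φ(w)/(z-w) dA(w)` of a compactly supported
`C¹` function `φ` is holomorphic off the closed support of `φ` and tends to `0` at
infinity. -/
theorem stmt_13 (φ : ℂ → ℂ) (hφ : ContDiff ℝ 1 φ) (hsupp : HasCompactSupport φ)
    (u : ℂ → ℂ)
    (hu : ∀ z : ℂ, u z = (Real.pi : ℂ)⁻¹ * ∫ w : ℂ, φ w / (z - w) ∂volume) :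
    (∀ z ∈ (tsupport φ)ᶜ, DifferentiableAt ℂ u z) ∧
      Tendsto u (cocompact ℂ) (nhds 0) := by
  obtain rfl : u = cauchyTransform (NNReal.pi⁻¹ • volume) φ := funext fun z => by
    simp [hu, cauchyTransform, div_eq_inv_mul, NNReal.smul_def]
  exact stmt_13_general
    (hφ.continuous.integrable_of_hasCompactSupport hsupp).smul_measure_nnreal hsupp
end
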